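/- (Dual tracking error lemma.) Suppose Assumptions 1–2 hold, λ̃ᵗ = Ãᵀμ for some μ, 0 < α ≤ 1, c ≥ 0, β = 1 − αθM, and consider one TiCoPD step X^{t+1} = βXᵗ + (1−β)X̂ᵗ − α(∇𝐟(Xᵗ) + λ̃ᵗ + θÃᵀÃX̂ᵗ), λ̃^{t+1} = λ̃ᵗ + ηÃᵀÃX̂ᵗ with η > 0. Then, with vᵗ = α(λ̃ᵗ + ∇𝐟((𝟙 ⊗ I_d)X̄ᵗ)) and v^{t+1} = α(λ̃^{t+1} + ∇𝐟((𝟙 ⊗ I_d)X̄^{t+1})): ‖v^{t+1}‖²_{Q̃ + cK̃} ≤ (1 + 2α)‖vᵗ‖²_{Q̃ + cK̃} + 2αη⟨vᵗ, Xᵗ⟩_{K̃ + cÃᵀÃ} + (4α²η²ρ̃₁²(1/ρ̃₂ + c) + 12α³(1/ρ̃₂ + c)L⁴)‖Xᵗ‖²_{K̃} + (4αη²ρ̃₁²(1/ρ̃₂ + c) + 12α³(1/ρ̃₂ + c)θ²M²L²)‖X̂ᵗ − Xᵗ‖² + 12α³(1/ρ̃₂ + c)nL²‖∇f(X̄ᵗ)‖².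 -/

import Mathlib

/-!
Write `S = ÃᵀÃ`, `K = K̃`, `Q = S†`, `W = Q + cK`, `κ = 1/ρ₂ + c`, `E = X̂ᵗ - Xᵗ`, and let `D` be the
change of `∇𝐟(𝟙X̄)` over the step. Then `v^{t+1} = vᵗ + α(ηSXᵗ + ηSE + D)`.

* `W` is symmetric positive semidefinite, so Young's inequality (`wnorm2_young`) applies to this
  sum; only the cross term of `vᵗ` with `ηSXᵗ` is kept exactly.
* Since `S` is injective on the range of `K`, `QS = SQ = K` (`pinv_mul`); hence `WS = K + cS`, which
  turns the remaining cross term into `⟨vᵗ, Xᵗ⟩_{K + cS}`.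
* `W ⪯ κK ⪯ κI` (`pinv_bounds`) and `S² ⪯ ρ₁²K` (`sqnorm_mulVec_le`) bound the terms in `SXᵗ`, `SE`.
* `λ̃ᵗ` and `SX̂ᵗ` have zero network average, so the average moves only through `E` and the gradients
  (`xbar_step`). Lipschitz continuity and Jensen's inequality then bound `‖D‖²`
  (`sqnorm_dual_drift_le`), which produces all the terms of order `α³`.
-/

open Matrix MeasureTheory ProbabilityTheory
open scoped Kronecker

noncomputable section

/-- squared Euclidean norm ‖v‖² of a finitely indexed real vector. -/
def sqnorm {ι : Type*} [Fintype ι] (v : ι → ℝ) : ℝ := ∑ i, (v i) ^ 2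

/-- Euclidean norm ‖v‖. -/
def enorm' {ι : Type*} [Fintype ι] (v : ι → ℝ) : ℝ := Real.sqrt (sqnorm v)

/-- matrix-weighted squared (semi)norm ‖v‖²_P = vᵀ P v. -/
def wnorm2 {ι : Type*} [Fintype ι] (P : Matrix ι ι ℝ) (v : ι → ℝ) : ℝ := v ⬝ᵥ P.mulVec v

/-- matrix-weighted inner product ⟨x, y⟩_P = xᵀ P y. -/
def winner {ι : Type*} [Fintype ι] (P : Matrix ι ι ℝ) (x y : ι → ℝ) : ℝ := x ⬝ᵥ P.mulVec y

/-- the consensus projector K̃ = (Iₙ − (1/n)𝟙𝟙ᵀ) ⊗ I_d. -/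
def Ktil (n d : ℕ) : Matrix (Fin n × Fin d) (Fin n × Fin d) ℝ :=
  ((1 : Matrix (Fin n) (Fin n) ℝ) - (n : ℝ)⁻¹ • Matrix.of (fun _ _ => (1 : ℝ))) ⊗ₖ
    (1 : Matrix (Fin d) (Fin d) ℝ)

/-- `A` is a (signed) incidence matrix of an undirected graph: each row has exactly one `+1`
entry and one `-1` entry, all other entries being `0`. -/
def IsIncidence {e n : ℕ} (A : Matrix (Fin e) (Fin n) ℝ) : Prop :=
  ∀ r : Fin e, ∃ i j : Fin n, i ≠ j ∧ A r i = 1 ∧ A r j = -1 ∧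
    ∀ k : Fin n, k ≠ i → k ≠ j → A r k = 0

/-- `Q` is the Moore–Penrose pseudoinverse of `S` (the four Penrose conditions). -/
def IsMoorePenrose {ι : Type*} [Fintype ι] [DecidableEq ι] (S Q : Matrix ι ι ℝ) : Prop :=
  S * Q * S = S ∧ Q * S * Q = Q ∧ (S * Q)ᵀ = S * Q ∧ (Q * S)ᵀ = Q * S

/-- the ℓ₂ operator (spectral) norm of a square matrix. -/
def specNorm {ι : Type*} [Fintype ι] [DecidableEq ι] (S : Matrix ι ι ℝ) : ℝ :=
  ‖Matrix.toEuclideanCLM (𝕜 := ℝ) S‖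

/-- Ã = A ⊗ I_d. -/
def Atil {e n : ℕ} (d : ℕ) (A : Matrix (Fin e) (Fin n) ℝ) :
    Matrix (Fin e × Fin d) (Fin n × Fin d) ℝ :=
  A ⊗ₖ (1 : Matrix (Fin d) (Fin d) ℝ)

/-- the (tensored) graph Laplacian ÃᵀÃ. -/
def lapl {e n : ℕ} (d : ℕ) (A : Matrix (Fin e) (Fin n) ℝ) :
    Matrix (Fin n × Fin d) (Fin n × Fin d) ℝ :=
  (Atil d A)ᵀ * Atil d A

/-- the network average X̄ = (1/n)(𝟙ᵀ ⊗ I_d)X. -/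
def xbar {n d : ℕ} (X : Fin n × Fin d → ℝ) : Fin d → ℝ := fun j => (n : ℝ)⁻¹ * ∑ i, X (i, j)

/-- the consensus embedding (𝟙 ⊗ I_d)x̄ of a vector x̄ ∈ ℝ^d into ℝ^{nd}. -/
def consVec {d : ℕ} (n : ℕ) (x : Fin d → ℝ) : Fin n × Fin d → ℝ := fun p => x p.2

/-- the stacked gradient ∇𝐟(X) = (∇f₁(X₁), …, ∇f_n(X_n)). -/
def gradF {n d : ℕ} (gradf : Fin n → (Fin d → ℝ) → (Fin d → ℝ)) (X : Fin n × Fin d → ℝ) :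
    Fin n × Fin d → ℝ := fun p => gradf p.1 (fun j => X (p.1, j)) p.2

/-- the averaged objective f(x̄) = (1/n)∑ᵢ fᵢ(x̄). -/
def fbar {n d : ℕ} (f : Fin n → (Fin d → ℝ) → ℝ) (x : Fin d → ℝ) : ℝ :=
  (n : ℝ)⁻¹ * ∑ i, f i x

/-- the averaged gradient ∇f(x̄) = (1/n)∑ᵢ ∇fᵢ(x̄). -/
def gradfbar {n d : ℕ} (gradf : Fin n → (Fin d → ℝ) → (Fin d → ℝ)) (x : Fin d → ℝ) :
    Fin d → ℝ := fun j => (n : ℝ)⁻¹ * ∑ i, gradf i x j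

/-- a gradient vector, seen as a continuous linear functional on ℝ^d. -/
def dotCLM {d : ℕ} (g : Fin d → ℝ) : (Fin d → ℝ) →L[ℝ] ℝ :=
  ∑ j, g j • ContinuousLinearMap.proj j

/-- the auxiliary dual-tracking variable vᵗ = α(λ̃ᵗ + ∇𝐟((𝟙 ⊗ I_d)X̄ᵗ)). -/
def vTi {n d : ℕ} (gradf : Fin n → (Fin d → ℝ) → (Fin d → ℝ)) (α : ℝ)
    (lam X : Fin n × Fin d → ℝ) : Fin n × Fin d → ℝ :=
  α • (lam + gradF gradf (consVec n (xbar X)))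

/-- δ̃ = max{(1−δ)²(1−δ/2)²/((1−δ/2)²−(1−δ)²), 1}. -/
def deltaTil (δ : ℝ) : ℝ := max ((1 - δ) ^ 2 * (1 - δ / 2) ^ 2 / ((1 - δ / 2) ^ 2 - (1 - δ) ^ 2)) 1

/-- δ₂ = max{16η/δ, 1}. -/
def delta2 (δ η : ℝ) : ℝ := max (16 * η / δ) 1

/-- δ₁ = 12·max{2, 2/(ρ̃₂η), δ₂δ̃}. -/
def delta1 (δ η ρ₂ : ℝ) : ℝ := 12 * max (max 2 (2 / (ρ₂ * η))) (delta2 δ η * deltaTil δ)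

/-- θ_lb. -/
def thetaLb (n : ℕ) (L a η ρ₁ ρ₂ δ : ℝ) : ℝ :=
  max (4 * L ^ 2 / (n * ρ₂ * a))
    ((2 / ρ₂) * (1 + 2 * L + 8 * η * ρ₁ ^ 2 / ρ₂ +
      delta1 δ η ρ₂ * (3 / 2 + 3 * L ^ 2 + η * ρ₁ + ρ₁ ^ 2 / 2)))

/-- α_ub = (max{16η, δ}/(320θ²))·min{1/M², na/M², 1/ρ̃₁²}. -/
def alphaUb (n : ℕ) (a η δ θ M ρ₁ : ℝ) : ℝ :=
  (max (16 * η) δ / (320 * θ ^ 2)) * min (min (1 / M ^ 2) (n * a / M ^ 2)) (1 / ρ₁ ^ 2)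

/-- one step of the TiCoPD recursion, driven by compression randomness ξ. -/
def TiCoPD {e n d : ℕ} {Ω S : Type*} (A : Matrix (Fin e) (Fin n) ℝ)
    (gradf : Fin n → (Fin d → ℝ) → (Fin d → ℝ)) (α β θ η : ℝ)
    (ξ : ℕ → Ω → S) (Q : (Fin n × Fin d → ℝ) → S → (Fin n × Fin d → ℝ))
    (X Xhat lam : ℕ → Ω → (Fin n × Fin d → ℝ)) : Prop :=
  ∀ t ω,
    X (t + 1) ω = β • X t ω + (1 - β) • Xhat t ω -
        α • (gradF gradf (X t ω) + lam t ω + θ • (lapl d A).mulVec (Xhat t ω)) ∧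
    lam (t + 1) ω = lam t ω + η • (lapl d A).mulVec (Xhat t ω) ∧
    Xhat (t + 1) ω = Xhat t ω + Q (X (t + 1) ω - Xhat t ω) (ξ (t + 1) ω)

/-- the Lyapunov function F_t of Theorem 1. -/
def FLyap {n d : ℕ} (f : Fin n → (Fin d → ℝ) → ℝ)
    (gradf : Fin n → (Fin d → ℝ) → (Fin d → ℝ))
    (Qtil : Matrix (Fin n × Fin d) (Fin n × Fin d) ℝ)
    (fstar a α η θ δ₁ δ₂ : ℝ) (X Xhat lam : Fin n × Fin d → ℝ) : ℝ :=
  fbar f (xbar X) - fstar +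
    (a / (η * α)) *
      wnorm2 (Qtil + (α * ((δ₁ / 2) * (θ + η) - θ - δ₂ * θ)) • Ktil n d) (vTi gradf α lam X) +
    a * wnorm2 (Ktil n d) X +
    δ₁ * a * winner (Ktil n d) X (vTi gradf α lam X) +
    δ₂ * a * sqnorm (Xhat - X)


/-! ### Quadratic forms and Young's inequality -/

lemma dual_winner_symm {ι : Type*} [Fintype ι] {P : Matrix ι ι ℝ} (hP : Pᵀ = P) (x y : ι → ℝ) :
    winner P x y = winner P y x := by
  unfold winner
  rw [dotProduct_mulVec, ← mulVec_transpose, hP, dotProduct_comm]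

lemma sqnorm_eq_dot {ι : Type*} [Fintype ι] (v : ι → ℝ) : sqnorm v = v ⬝ᵥ v := by
  simp [sqnorm, dotProduct, sq]

lemma sqnorm_nonneg' {ι : Type*} [Fintype ι] (v : ι → ℝ) : 0 ≤ sqnorm v :=
  Finset.sum_nonneg fun _ _ => sq_nonneg _

lemma sqnorm_smul' {ι : Type*} [Fintype ι] (a : ℝ) (v : ι → ℝ) :
    sqnorm (a • v) = a ^ 2 * sqnorm v := by
  simp [sqnorm, mul_pow, Finset.mul_sum]

lemma wnorm2_smul' {ι : Type*} [Fintype ι] (P : Matrix ι ι ℝ) (a : ℝ) (v : ι → ℝ) :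
    wnorm2 P (a • v) = a ^ 2 * wnorm2 P v := by
  simp only [wnorm2, mulVec_smul, smul_dotProduct, dotProduct_smul, smul_eq_mul]
  ring

lemma sqnorm_add_three {ι : Type*} [Fintype ι] (a b c : ι → ℝ) :
    sqnorm (a + b + c) ≤ 3 * (sqnorm a + sqnorm b + sqnorm c) := by
  simp only [sqnorm, ← Finset.sum_add_distrib, Finset.mul_sum]
  refine Finset.sum_le_sum fun i _ => ?_
  simp only [Pi.add_apply]
  nlinarith [sq_nonneg (a i - b i), sq_nonneg (a i - c i), sq_nonneg (b i - c i)]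

/-- Young's inequality for a positive semidefinite form. The cross terms of `v` with `b` and `D`
cost `α‖v‖²` each; the cross term with `a` is kept exactly; `‖a + b + D‖² ≤ 3(‖a‖² + ‖b‖² + ‖D‖²)`
and `α² ≤ α` absorb the rest. -/
lemma wnorm2_young {ι : Type*} [Fintype ι] {P : Matrix ι ι ℝ} (hP : Pᵀ = P)
    (hpos : ∀ v, 0 ≤ wnorm2 P v) (v a b D : ι → ℝ) {α : ℝ} (h0 : 0 < α) (h1 : α ≤ 1) :
    wnorm2 P (v + α • (a + b + D)) ≤ (1 + 2 * α) * wnorm2 P v + 2 * α * winner P v a +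
      4 * α ^ 2 * wnorm2 P a + 4 * α * wnorm2 P b + 4 * α * wnorm2 P D := by
  have e1 := hpos (v - b)
  have e2 := hpos (v - D)
  have e3 := hpos (a - b)
  have e4 := hpos (a - D)
  have e5 := hpos (b - D)
  have ea := hpos a
  have eb := hpos b
  have eD := hpos D
  have s1 := dual_winner_symm hP a v
  have s2 := dual_winner_symm hP b v
  have s3 := dual_winner_symm hP D v
  have s4 := dual_winner_symm hP b a
  have s5 := dual_winner_symm hP D a
  have s6 := dual_winner_symm hP D b
  simp only [wnorm2, winner, mulVec_add, mulVec_sub, mulVec_smul, add_dotProduct, dotProduct_add,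
    sub_dotProduct, dotProduct_sub, smul_dotProduct, dotProduct_smul, smul_eq_mul] at *
  rw [s2, s4] at *
  rw [s1, s3, s5, s6] at *
  have f1 := mul_nonneg h0.le e1
  have f2 := mul_nonneg h0.le e2
  have f3 := mul_nonneg (sq_nonneg α) e3
  have f4 := mul_nonneg (sq_nonneg α) e4
  have f5 := mul_nonneg (sq_nonneg α) e5
  have f6 := mul_nonneg (sq_nonneg α) ea
  have f7 := mul_nonneg (mul_nonneg h0.le (sub_nonneg.2 h1)) eb
  have f8 := mul_nonneg (mul_nonneg h0.le (sub_nonneg.2 h1)) eD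
  linarith

lemma wnorm2_proj {ι : Type*} [Fintype ι] {K : Matrix ι ι ℝ} (hKt : Kᵀ = K) (hKK : K * K = K)
    (x : ι → ℝ) : wnorm2 K x = sqnorm (K *ᵥ x) := by
  rw [sqnorm_eq_dot, wnorm2, dotProduct_mulVec (K *ᵥ x), ← mulVec_transpose, hKt, mulVec_mulVec,
    hKK, dotProduct_comm]

lemma wnorm2_nonneg_of_psd {ι : Type*} [Fintype ι] {P : Matrix ι ι ℝ} (h : P.PosSemidef)
    (x : ι → ℝ) : 0 ≤ wnorm2 P x := by
  simpa [wnorm2] using h.dotProduct_mulVec_nonneg x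

/-! ### The pseudoinverse and spectral bounds -/

/-- `S ⪰ ρ₂K` makes `S` injective on the fixed space of `K`: for `y` in the range of
`D`, the form of `S - ρ₂K` at `y` is `-ρ₂‖y‖²`. -/
lemma eq_zero_of_psd {ι : Type*} [Fintype ι] {S K D : Matrix ι ι ℝ} {ρ₂ : ℝ}
    (hρ₂ : 0 < ρ₂) (h2a : (S - ρ₂ • K).PosSemidef) (hSD : S * D = 0) (hKD : K * D = D) :
    D = 0 := by
  classical
  refine Matrix.ext_of_mulVec_single fun i => ?_
  set x : ι → ℝ := Pi.single i 1
  have h := wnorm2_nonneg_of_psd h2a (D *ᵥ x)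
  rw [wnorm2, sub_mulVec, smul_mulVec, mulVec_mulVec, mulVec_mulVec, hSD, hKD, zero_mulVec,
    zero_sub, dotProduct_neg, dotProduct_smul, smul_eq_mul, ← sqnorm_eq_dot] at h
  have h0 : sqnorm (D *ᵥ x) = 0 := by
    have := sqnorm_nonneg' (D *ᵥ x)
    nlinarith
  rw [zero_mulVec]
  exact dotProduct_self_eq_zero.1 (by rw [← sqnorm_eq_dot, h0])

/-- `S` kills `K - QS` and `K - SQ`, and `K` fixes both, so they vanish by `eq_zero_of_psd`. -/
lemma pinv_mul {ι : Type*} [Fintype ι] [DecidableEq ι] {S K Q : Matrix ι ι ℝ} {ρ₂ : ℝ}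
    (hρ₂ : 0 < ρ₂) (h2a : (S - ρ₂ • K).PosSemidef) (hSt : Sᵀ = S) (hKt : Kᵀ = K)
    (hKK : K * K = K) (hSK : S * K = S) (hQ : IsMoorePenrose S Q) :
    Q * S = K ∧ S * Q = K := by
  obtain ⟨q1, -, q3, q4⟩ := hQ
  have hKS : K * S = S := by
    have := congrArg transpose hSK
    rwa [transpose_mul, hSt, hKt] at this
  constructor
  · have hT : K * (Q * S) = Q * S := by
      have := congrArg transpose (show Q * S * K = Q * S by rw [Matrix.mul_assoc, hSK])
      rwa [transpose_mul, q4, hKt] at this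
    refine (sub_eq_zero.1 (eq_zero_of_psd hρ₂ h2a (D := K - Q * S) ?_ ?_)).symm
    · rw [Matrix.mul_sub, hSK, ← Matrix.mul_assoc, q1, sub_self]
    · rw [Matrix.mul_sub, hKK, hT]
  · have hT : S * (S * Q) = S := by
      have := congrArg transpose q1
      rwa [transpose_mul, q3, hSt] at this
    refine (sub_eq_zero.1 (eq_zero_of_psd hρ₂ h2a (D := K - S * Q) ?_ ?_)).symm
    · rw [Matrix.mul_sub, hSK, hT, sub_self]
    · rw [Matrix.mul_sub, hKK, ← Matrix.mul_assoc, hKS]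

/-- Symmetry of the pseudoinverse is not among the Penrose conditions; it is read off from the
manifestly symmetric expression `Q = QᵀSQ`. -/
lemma pinv_symm_form {ι : Type*} [Fintype ι] [DecidableEq ι] {S K Q : Matrix ι ι ℝ}
    (hSt : Sᵀ = S) (hKt : Kᵀ = K) (hQ : IsMoorePenrose S Q) (hQS : Q * S = K) (hSQ : S * Q = K) :
    Qᵀ = Q ∧ K * Q = Q ∧ Qᵀ * S * Q = Q := by
  obtain ⟨-, q2, -, -⟩ := hQ
  have hKQ : K * Q = Q := by rw [← hQS, q2]
  have h1 : Qᵀ * S = K := by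
    have := congrArg transpose hSQ
    rwa [transpose_mul, hSt, hKt] at this
  have h2 : Qᵀ * S * Q = Q := by rw [h1, hKQ]
  refine ⟨?_, hKQ, h2⟩
  have := congrArg transpose h2
  rw [transpose_mul, transpose_mul, transpose_transpose, hSt, ← Matrix.mul_assoc, h2] at this
  exact this.symm

/-- `0 ⪯ Q ⪯ ρ₂⁻¹K`. With `y = Qv` one has `vᵀQv = yᵀSy ≥ ρ₂‖y‖²` and `vᵀQv = ⟨Kv, y⟩`, so
AM-GM closes the estimate. -/
lemma pinv_bounds {ι : Type*} [Fintype ι] [DecidableEq ι] {S K Q : Matrix ι ι ℝ} {ρ₂ : ℝ}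
    (hρ₂ : 0 < ρ₂) (h2a : (S - ρ₂ • K).PosSemidef) (hSt : Sᵀ = S) (hKt : Kᵀ = K)
    (hKK : K * K = K) (hSK : S * K = S) (hQ : IsMoorePenrose S Q) (v : ι → ℝ) :
    0 ≤ wnorm2 Q v ∧ wnorm2 Q v ≤ 1 / ρ₂ * wnorm2 K v := by
  obtain ⟨hQS, hSQ⟩ := pinv_mul hρ₂ h2a hSt hKt hKK hSK hQ
  obtain ⟨hQt, hKQ, hQSQ⟩ := pinv_symm_form hSt hKt hQ hQS hSQ
  set y := Q *ᵥ v with hy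
  have hKy : K *ᵥ y = y := by rw [hy, mulVec_mulVec, hKQ]
  have e1 : wnorm2 Q v = wnorm2 S y := by
    have e : wnorm2 S y = v ⬝ᵥ (Qᵀ * S * Q) *ᵥ v := by
      rw [wnorm2, hy, Matrix.mul_assoc, ← mulVec_mulVec, dotProduct_mulVec v, vecMul_transpose,
        mulVec_mulVec]
    rw [e, hQSQ, wnorm2]
  have e2 : ρ₂ * sqnorm y ≤ wnorm2 S y := by
    have := wnorm2_nonneg_of_psd h2a y
    rw [wnorm2, sub_mulVec, smul_mulVec, hKy, dotProduct_sub, dotProduct_smul, smul_eq_mul,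
      ← sqnorm_eq_dot] at this
    exact sub_nonneg.1 this
  have e3 : wnorm2 Q v = (K *ᵥ v) ⬝ᵥ y := by
    rw [← vecMul_transpose, hKt, ← dotProduct_mulVec, hKy, wnorm2]
  have e4 : 0 ≤ sqnorm (K *ᵥ v - ρ₂ • y) := sqnorm_nonneg' _
  have e5 : sqnorm (K *ᵥ v - ρ₂ • y) =
      sqnorm (K *ᵥ v) - 2 * ρ₂ * ((K *ᵥ v) ⬝ᵥ y) + ρ₂ ^ 2 * sqnorm y := by
    simp only [sqnorm_eq_dot, sub_dotProduct, dotProduct_sub, smul_dotProduct, dotProduct_smul,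
      smul_eq_mul, dotProduct_comm y]
    ring
  have hy0 := sqnorm_nonneg' y
  refine ⟨by rw [e1]; exact le_trans (by positivity) e2, ?_⟩
  rw [wnorm2_proj hKt hKK, one_div, ← div_eq_inv_mul, le_div_iff₀ hρ₂]
  rw [e5, ← e3] at e4
  rw [← e1] at e2
  nlinarith [mul_le_mul_of_nonneg_left e2 hρ₂.le]

/-- `0 ⪯ S ⪯ ρ₁K` gives `S² ⪯ ρ₁²K`: expand the form of `S` at `ρ₁x - Sx`. -/
lemma sqnorm_mulVec_le {ι : Type*} [Fintype ι] {S K : Matrix ι ι ℝ} {ρ₁ : ℝ} (hρ₁ : 0 < ρ₁)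
    (hS : ∀ v, 0 ≤ wnorm2 S v) (h2b : (ρ₁ • K - S).PosSemidef) (hSt : Sᵀ = S)
    (hKS : K * S = S) (x : ι → ℝ) :
    sqnorm (S *ᵥ x) ≤ ρ₁ ^ 2 * wnorm2 K x := by
  set y := S *ᵥ x with hy
  have hKy : K *ᵥ y = y := by rw [hy, mulVec_mulVec, hKS]
  have u : ∀ z, wnorm2 S z ≤ ρ₁ * wnorm2 K z := fun z => by
    have := wnorm2_nonneg_of_psd h2b z
    rw [wnorm2, sub_mulVec, smul_mulVec, dotProduct_sub, dotProduct_smul, smul_eq_mul] at this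
    exact sub_nonneg.1 this
  have uy := u y
  rw [wnorm2.eq_1 K, hKy, ← sqnorm_eq_dot] at uy
  have ux := u x
  have h := hS (ρ₁ • x - y)
  have hxy : x ⬝ᵥ S *ᵥ y = sqnorm y := by
    rw [dotProduct_mulVec, ← mulVec_transpose, hSt, sqnorm_eq_dot]
  have hyx : y ⬝ᵥ S *ᵥ x = sqnorm y := by rw [← hy, sqnorm_eq_dot]
  have e : wnorm2 S (ρ₁ • x - y) = ρ₁ ^ 2 * wnorm2 S x - 2 * ρ₁ * sqnorm y + wnorm2 S y := by
    simp only [wnorm2, mulVec_sub, mulVec_smul, sub_dotProduct, dotProduct_sub, smul_dotProduct,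
      dotProduct_smul, smul_eq_mul, hxy, hyx]
    ring
  rw [e] at h
  have h3 := mul_le_mul_of_nonneg_left ux (sq_nonneg ρ₁)
  refine le_of_mul_le_mul_left ?_ hρ₁
  nlinarith

/-! ### The consensus projector and network averages -/

lemma Ktil_mulVec {n d : ℕ} (X : Fin n × Fin d → ℝ) :
    Ktil n d *ᵥ X = X - consVec n (xbar X) := by
  ext ⟨i, j⟩
  simp [Ktil, mulVec, dotProduct, Fintype.sum_prod_type, consVec, xbar, Matrix.one_apply,
    sub_mul, Finset.sum_sub_distrib, Finset.mul_sum]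

lemma Ktil_transpose (n d : ℕ) : (Ktil n d)ᵀ = Ktil n d := by
  ext ⟨i, j⟩ ⟨k, l⟩
  simp [Ktil, Matrix.one_apply, eq_comm]

lemma xbar_consVec {n d : ℕ} (hn : 2 ≤ n) (x : Fin d → ℝ) : xbar (consVec n x) = x := by
  ext j
  have : (n : ℝ) ≠ 0 := by positivity
  simp [xbar, consVec, this]

lemma xbar_add {n d : ℕ} (X Y : Fin n × Fin d → ℝ) : xbar (X + Y) = xbar X + xbar Y := by
  ext j
  simp [xbar, Finset.sum_add_distrib, mul_add]

lemma xbar_sub {n d : ℕ} (X Y : Fin n × Fin d → ℝ) : xbar (X - Y) = xbar X - xbar Y := by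
  ext j
  simp [xbar, Finset.sum_sub_distrib, mul_sub]

lemma xbar_smul {n d : ℕ} (a : ℝ) (X : Fin n × Fin d → ℝ) : xbar (a • X) = a • xbar X := by
  ext j
  simp [xbar, ← Finset.mul_sum, mul_left_comm]

lemma Ktil_mul_self {n : ℕ} (d : ℕ) (hn : 2 ≤ n) : Ktil n d * Ktil n d = Ktil n d := by
  refine Matrix.ext_of_mulVec_single fun i => ?_
  rw [← mulVec_mulVec, Ktil_mulVec, Ktil_mulVec, xbar_sub, xbar_consVec hn, sub_self]
  ext p
  simp [consVec]

/-- The rows of an incidence matrix sum to zero. -/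
lemma Atil_mul_Ktil {e n : ℕ} (d : ℕ) {A : Matrix (Fin e) (Fin n) ℝ} (hA : IsIncidence A) :
    Atil d A * Ktil n d = Atil d A := by
  have hs : A * (Matrix.of (fun _ _ => (1 : ℝ)) : Matrix (Fin n) (Fin n) ℝ) = 0 := by
    ext r k
    obtain ⟨i, j, hij, hi, hj, h0⟩ := hA r
    simp only [mul_apply, of_apply, mul_one, Matrix.zero_apply]
    rw [Fintype.sum_eq_add i j hij fun x hx => h0 x hx.1 hx.2, hi, hj]
    norm_num
  rw [Atil, Ktil, ← mul_kronecker_mul, Matrix.mul_sub, Matrix.mul_smul, hs]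
  simp

lemma xbar_Atil_transpose {e n d : ℕ} (hn : 2 ≤ n) {A : Matrix (Fin e) (Fin n) ℝ}
    (hA : IsIncidence A) (μ : Fin e × Fin d → ℝ) : xbar ((Atil d A)ᵀ *ᵥ μ) = 0 := by
  have h : Ktil n d * (Atil d A)ᵀ = (Atil d A)ᵀ := by
    rw [← Ktil_transpose, ← transpose_mul, Atil_mul_Ktil d hA]
  rw [← h, ← mulVec_mulVec, Ktil_mulVec, xbar_sub, xbar_consVec hn, sub_self]

/-- Jensen: averaging contracts, `n‖Ȳ‖² ≤ ‖Y‖²`. -/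
lemma sqnorm_xbar_le {n d : ℕ} (hn : 2 ≤ n) (Y : Fin n × Fin d → ℝ) :
    n * sqnorm (xbar Y) ≤ sqnorm Y := by
  have hn0 : (0 : ℝ) < n := by positivity
  simp only [sqnorm, xbar, Fintype.sum_prod_type_right]
  rw [Finset.mul_sum]
  refine Finset.sum_le_sum fun j _ => ?_
  have h := sq_sum_le_card_mul_sum_sq (s := Finset.univ) (f := fun i => Y (i, j))
  rw [Finset.card_univ, Fintype.card_fin] at h
  rw [mul_pow]
  calc (n : ℝ) * ((n : ℝ)⁻¹ ^ 2 * (∑ i, Y (i, j)) ^ 2)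
      = (n : ℝ)⁻¹ * (∑ i, Y (i, j)) ^ 2 := by field_simp
    _ ≤ (n : ℝ)⁻¹ * (n * ∑ i, Y (i, j) ^ 2) := by gcongr
    _ = _ := by field_simp

lemma sqnorm_consVec {n d : ℕ} (x : Fin d → ℝ) : sqnorm (consVec n x) = n * sqnorm x := by
  simp [sqnorm, consVec, Fintype.sum_prod_type]

/-! ### Drift of the gradients over one step -/

lemma sqnorm_gradF_sub_le {n d : ℕ} {gradf : Fin n → (Fin d → ℝ) → (Fin d → ℝ)} {L : ℝ}
    (hlip : ∀ i x y, enorm' (gradf i x - gradf i y) ≤ L * enorm' (x - y))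
    (X Y : Fin n × Fin d → ℝ) :
    sqnorm (gradF gradf X - gradF gradf Y) ≤ L ^ 2 * sqnorm (X - Y) := by
  -- squaring removes the need to know the sign of `L`
  have key : ∀ i x y, sqnorm (gradf i x - gradf i y) ≤ L ^ 2 * sqnorm (x - y) := fun i x y => by
    have h := pow_le_pow_left₀ (Real.sqrt_nonneg _) (hlip i x y) 2
    unfold enorm' at h
    rwa [mul_pow, Real.sq_sqrt (sqnorm_nonneg' _),
      Real.sq_sqrt (sqnorm_nonneg' _)] at h
  have h := Finset.sum_le_sum fun i (_ : i ∈ Finset.univ) =>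
    key i (fun j => X (i, j)) (fun j => Y (i, j))
  rw [← Finset.mul_sum] at h
  simpa only [sqnorm, Fintype.sum_prod_type, gradF, Pi.sub_apply] using h

/-- The average moves by a step of length `α`; the gradient is split at the consensus point, and
`λ̃` and the range of the Laplacian drop out because they have zero average. -/
lemma xbar_step {n d e : ℕ} (hn : 2 ≤ n) {A : Matrix (Fin e) (Fin n) ℝ} (hA : IsIncidence A)
    (gradf : Fin n → (Fin d → ℝ) → (Fin d → ℝ)) {lam X Xhat Xnext : Fin n × Fin d → ℝ}
    (hlam : xbar lam = 0) {α β θ M : ℝ} (hβ : β = 1 - α * θ * M)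
    (hXnext : Xnext = β • X + (1 - β) • Xhat -
        α • (gradF gradf X + lam + θ • (lapl d A).mulVec Xhat)) :
    xbar Xnext - xbar X = α • ((θ * M) • xbar (Xhat - X) +
      (-1 : ℝ) • xbar (gradF gradf X - gradF gradf (consVec n (xbar X))) +
      (-1 : ℝ) • gradfbar gradf (xbar X)) := by
  have h1 : xbar ((lapl d A).mulVec Xhat) = 0 := by
    rw [lapl, ← mulVec_mulVec, xbar_Atil_transpose hn hA]
  have h2 : xbar (gradF gradf (consVec n (xbar X))) = gradfbar gradf (xbar X) := rfl
  rw [hXnext, hβ]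
  simp only [xbar_add, xbar_sub, xbar_smul, h1, h2, hlam]
  module

/-- The factor `3` is the cost of splitting the three terms of `xbar_step`. -/
lemma sqnorm_dual_drift_le {n d e : ℕ} (hn : 2 ≤ n) {A : Matrix (Fin e) (Fin n) ℝ}
    (hA : IsIncidence A) {gradf : Fin n → (Fin d → ℝ) → (Fin d → ℝ)} {L : ℝ}
    (hlip : ∀ i x y, enorm' (gradf i x - gradf i y) ≤ L * enorm' (x - y))
    {lam X Xhat Xnext : Fin n × Fin d → ℝ}
    (hlam : xbar lam = 0) {α β θ M : ℝ} (hβ : β = 1 - α * θ * M)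
    (hXnext : Xnext = β • X + (1 - β) • Xhat -
        α • (gradF gradf X + lam + θ • (lapl d A).mulVec Xhat)) :
    sqnorm (gradF gradf (consVec n (xbar Xnext)) - gradF gradf (consVec n (xbar X))) ≤
      3 * α ^ 2 * L ^ 2 * (θ ^ 2 * M ^ 2 * sqnorm (Xhat - X) + L ^ 2 * wnorm2 (Ktil n d) X +
        n * sqnorm (gradfbar gradf (xbar X))) := by
  have h1 := sqnorm_gradF_sub_le hlip (consVec n (xbar Xnext)) (consVec n (xbar X))
  have h2 : consVec n (xbar Xnext) - consVec n (xbar X) = consVec n (xbar Xnext - xbar X) := rfl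
  rw [h2, sqnorm_consVec, xbar_step hn hA gradf hlam hβ hXnext, sqnorm_smul'] at h1
  refine h1.trans ?_
  have h3 := sqnorm_add_three ((θ * M) • xbar (Xhat - X))
    ((-1 : ℝ) • xbar (gradF gradf X - gradF gradf (consVec n (xbar X))))
    ((-1 : ℝ) • gradfbar gradf (xbar X))
  simp only [sqnorm_smul' (-1), sqnorm_smul' (θ * M)] at h3
  have h4 := sqnorm_xbar_le hn (Xhat - X)
  have h5 := sqnorm_xbar_le hn (gradF gradf X - gradF gradf (consVec n (xbar X)))
  have h6 := sqnorm_gradF_sub_le hlip X (consVec n (xbar X))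
  rw [← Ktil_mulVec, ← wnorm2_proj (Ktil_transpose n d) (Ktil_mul_self d hn)] at h6
  have h7 := mul_le_mul_of_nonneg_left h3 (Nat.cast_nonneg (α := ℝ) n)
  have h8 := mul_le_mul_of_nonneg_left h4 (sq_nonneg (θ * M))
  have h9 : (n : ℝ) * sqnorm ((θ * M) • xbar (Xhat - X) +
      (-1 : ℝ) • xbar (gradF gradf X - gradF gradf (consVec n (xbar X))) +
      (-1 : ℝ) • gradfbar gradf (xbar X)) ≤
      3 * (θ ^ 2 * M ^ 2 * sqnorm (Xhat - X) + L ^ 2 * wnorm2 (Ktil n d) X +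
        n * sqnorm (gradfbar gradf (xbar X))) := by
    linarith
  have h10 := mul_le_mul_of_nonneg_left h9 (mul_nonneg (sq_nonneg α) (sq_nonneg L))
  linarith

/-- **Dual tracking error lemma.**  Under Assumptions 1–2, with λ̃ᵗ = Ãᵀμ, 0 < α ≤ 1, c ≥ 0,
β = 1 − αθM, and one TiCoPD primal-dual step with η > 0:
‖v^{t+1}‖²_{Q̃+cK̃} ≤ (1+2α)‖vᵗ‖²_{Q̃+cK̃} + 2αη⟨vᵗ,Xᵗ⟩_{K̃+cÃᵀÃ}
  + (4α²η²ρ̃₁²(1/ρ̃₂+c) + 12α³(1/ρ̃₂+c)L⁴)‖Xᵗ‖²_K̃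
  + (4αη²ρ̃₁²(1/ρ̃₂+c) + 12α³(1/ρ̃₂+c)θ²M²L²)‖X̂ᵗ − Xᵗ‖²
  + 12α³(1/ρ̃₂+c)nL²‖∇f(X̄ᵗ)‖². -/
theorem ticopd_dual_tracking_error
    {n d e : ℕ} (hn : 2 ≤ n) (hd : 1 ≤ d)
    (A : Matrix (Fin e) (Fin n) ℝ) (hA : IsIncidence A)
    -- Assumption 2
    (ρ₁ ρ₂ : ℝ) (hρ : ρ₂ ≤ ρ₁) (hρ₂ : 0 < ρ₂)
    (h2a : (lapl d A - ρ₂ • Ktil n d).PosSemidef)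
    (h2b : (ρ₁ • Ktil n d - lapl d A).PosSemidef)
    -- the pseudoinverse Q̃ = (ÃᵀÃ)†
    (Qtil : Matrix (Fin n × Fin d) (Fin n × Fin d) ℝ) (hQtil : IsMoorePenrose (lapl d A) Qtil)
    -- Assumption 1
    (f : Fin n → (Fin d → ℝ) → ℝ) (gradf : Fin n → (Fin d → ℝ) → (Fin d → ℝ)) (L : ℝ)
    (hdiff : ∀ i x, HasFDerivAt (f i) (dotCLM (gradf i x)) x)
    (hlip : ∀ i x y, enorm' (gradf i x - gradf i y) ≤ L * enorm' (x - y))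
    -- dual variable in the range of Ãᵀ
    (lam : Fin n × Fin d → ℝ) (μv : Fin e × Fin d → ℝ) (hlam : lam = (Atil d A)ᵀ.mulVec μv)
    -- step sizes and constant
    (α β θ η c : ℝ) (hα0 : 0 < α) (hα1 : α ≤ 1) (hc : 0 ≤ c) (hθ : 0 < θ) (hη : 0 < η)
    (hβ : β = 1 - α * θ * specNorm (lapl d A))
    -- one TiCoPD primal-dual step
    (X Xhat Xnext lamnext : Fin n × Fin d → ℝ)
    (hXnext : Xnext = β • X + (1 - β) • Xhat -
        α • (gradF gradf X + lam + θ • (lapl d A).mulVec Xhat))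
    (hlamnext : lamnext = lam + η • (lapl d A).mulVec Xhat) :
    wnorm2 (Qtil + c • Ktil n d) (vTi gradf α lamnext Xnext) ≤
      (1 + 2 * α) * wnorm2 (Qtil + c • Ktil n d) (vTi gradf α lam X) +
        2 * α * η * winner (Ktil n d + c • lapl d A) (vTi gradf α lam X) X +
        (4 * α ^ 2 * η ^ 2 * ρ₁ ^ 2 * (1 / ρ₂ + c) + 12 * α ^ 3 * (1 / ρ₂ + c) * L ^ 4) *
          wnorm2 (Ktil n d) X +
        (4 * α * η ^ 2 * ρ₁ ^ 2 * (1 / ρ₂ + c) +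
            12 * α ^ 3 * (1 / ρ₂ + c) * θ ^ 2 * (specNorm (lapl d A)) ^ 2 * L ^ 2) *
          sqnorm (Xhat - X) +
        12 * α ^ 3 * (1 / ρ₂ + c) * n * L ^ 2 * sqnorm (gradfbar gradf (xbar X)) := by
  set S := lapl d A with hS
  set K := Ktil n d with hK
  set M := specNorm S
  have hρ₁ : 0 < ρ₁ := hρ₂.trans_le hρ
  have hKt : Kᵀ = K := Ktil_transpose n d
  have hKK : K * K = K := Ktil_mul_self d hn
  have hSt : Sᵀ = S := by rw [hS, lapl, transpose_mul, transpose_transpose]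
  have hSK : S * K = S := by rw [hS, lapl, Matrix.mul_assoc, Atil_mul_Ktil d hA]
  have hKS : K * S = S := by
    have := congrArg transpose hSK
    rwa [transpose_mul, hSt, hKt] at this
  obtain ⟨hQS, hSQ⟩ := pinv_mul hρ₂ h2a hSt hKt hKK hSK hQtil
  have hQt := (pinv_symm_form hSt hKt hQtil hQS hSQ).1
  have hQb := pinv_bounds hρ₂ h2a hSt hKt hKK hSK hQtil
  have hK0 : ∀ v, 0 ≤ wnorm2 K v := fun v => by
    rw [wnorm2_proj hKt hKK]; exact sqnorm_nonneg' _
  have hS0 : ∀ v, 0 ≤ wnorm2 S v := fun v => by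
    have := wnorm2_nonneg_of_psd h2a v
    rw [wnorm2, sub_mulVec, smul_mulVec, dotProduct_sub, dotProduct_smul, smul_eq_mul] at this
    exact (mul_nonneg hρ₂.le (hK0 v)).trans (sub_nonneg.1 this)
  -- `‖x‖² = ‖Kx‖² + ‖x - Kx‖²`
  have hK1 : ∀ v, wnorm2 K v ≤ sqnorm v := fun v => by
    have h := sqnorm_nonneg' (v - K *ᵥ v)
    have h' := wnorm2_proj hKt hKK v
    have e : sqnorm (v - K *ᵥ v) = sqnorm v - 2 * wnorm2 K v + sqnorm (K *ᵥ v) := by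
      simp only [wnorm2, sqnorm_eq_dot, sub_dotProduct, dotProduct_sub, dotProduct_comm _ v]
      ring
    linarith
  set W := Qtil + c • K with hW
  set κ := 1 / ρ₂ + c with hκ
  have hκ0 : 0 ≤ κ := by positivity
  have hWe : ∀ v, wnorm2 W v = wnorm2 Qtil v + c * wnorm2 K v := fun v => by
    simp only [wnorm2, hW, add_mulVec, smul_mulVec, dotProduct_add, dotProduct_smul, smul_eq_mul]
  have hWt : Wᵀ = W := by rw [hW, transpose_add, transpose_smul, hQt, hKt]
  have hW0 : ∀ v, 0 ≤ wnorm2 W v := fun v => by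
    rw [hWe]; exact add_nonneg (hQb v).1 (mul_nonneg hc (hK0 v))
  have hW1 : ∀ v, wnorm2 W v ≤ κ * sqnorm v := fun v => by
    have h := mul_le_mul_of_nonneg_left (hK1 v) hκ0
    have h' := (hQb v).2
    rw [hWe]
    linarith [add_mul (1 / ρ₂) c (wnorm2 K v)]
  have hWS : W * S = K + c • S := by rw [hW, Matrix.add_mul, hQS, Matrix.smul_mul, hKS]
  have hS1 : ∀ v, sqnorm (S *ᵥ v) ≤ ρ₁ ^ 2 * wnorm2 K v :=
    sqnorm_mulVec_le hρ₁ hS0 h2b hSt hKS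
  have hlam0 : xbar lam = 0 := by rw [hlam, xbar_Atil_transpose hn hA]
  have hdrift := sqnorm_dual_drift_le hn hA hlip hlam0 hβ hXnext
  set v := vTi gradf α lam X with hv
  set D := gradF gradf (consVec n (xbar Xnext)) - gradF gradf (consVec n (xbar X)) with hD
  have hvnext : vTi gradf α lamnext Xnext =
      v + α • (η • (S *ᵥ X) + η • (S *ᵥ (Xhat - X)) + D) := by
    rw [hv, hD, vTi, vTi, hlamnext, mulVec_sub]
    module
  have hy := wnorm2_young hWt hW0 v (η • (S *ᵥ X)) (η • (S *ᵥ (Xhat - X))) D hα0 hα1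
  rw [← hvnext, wnorm2_smul', wnorm2_smul'] at hy
  have hcross : winner W v (η • (S *ᵥ X)) = η * winner (K + c • S) v X := by
    rw [winner, winner, mulVec_smul, mulVec_mulVec, hWS, dotProduct_smul, smul_eq_mul]
  rw [hcross] at hy
  have hX : wnorm2 W (S *ᵥ X) ≤ κ * (ρ₁ ^ 2 * wnorm2 K X) :=
    (hW1 _).trans (mul_le_mul_of_nonneg_left (hS1 X) hκ0)
  have hE : wnorm2 W (S *ᵥ (Xhat - X)) ≤ κ * (ρ₁ ^ 2 * sqnorm (Xhat - X)) :=
    (hW1 _).trans (mul_le_mul_of_nonneg_left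
      ((hS1 _).trans (mul_le_mul_of_nonneg_left (hK1 _) (sq_nonneg _))) hκ0)
  have hDD := (hW1 D).trans (mul_le_mul_of_nonneg_left hdrift hκ0)
  have g1 := mul_le_mul_of_nonneg_left hX (by positivity : 0 ≤ 4 * α ^ 2 * η ^ 2)
  have g2 := mul_le_mul_of_nonneg_left hE (by positivity : 0 ≤ 4 * α * η ^ 2)
  have g3 := mul_le_mul_of_nonneg_left hDD (by positivity : 0 ≤ 4 * α)
  linarith

end
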